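/- For every real s > 1, the function g(γ) = (ln γ)^(s-1) / (ζ(s) Γ(s) γ (γ-1)) is nonnegative on (1,∞) and satisfies ∫₁^∞ g(γ) dγ = 1; i.e., g is a probability density function on (1,∞). It is the density of γ = 1/p when p has density f(p) = (-ln p)^(s-1) / (ζ(s) Γ(s) (1-p)) on (0,1). -/

import Mathlib

/-!
Substituting `γ = exp t` turns the integral of `g` into `1 / (ζ(s) Γ(s))` times the Bose–Einstein
integral `∫₀^∞ t^(s-1) / (e^t - 1) dt`. The latter is the Mellin transform of the geometric series
`1 / (e^t - 1) = ∑ e^(-(n+1)t)`, which integrates term by term to `∑ Γ(s) (n+1)^(-s) = Γ(s) ζ(s)`.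
-/

open MeasureTheory

/-- The Riemann zeta function for real `s > 1`, defined as `∑_{x=0}^∞ (x+1)^(-s)`. -/
noncomputable def zetaS (s : ℝ) : ℝ := ∑' x : ℕ, ((x : ℝ) + 1) ^ (-s)

lemma ofReal_zetaS {s : ℝ} (hs : 1 < s) : (zetaS s : ℂ) = riemannZeta s := by
  rw [zeta_eq_tsum_one_div_nat_add_one_cpow (by simpa using hs), zetaS, Complex.ofReal_tsum]
  refine tsum_congr fun n ↦ ?_
  rw [Complex.ofReal_cpow (by positivity), Complex.ofReal_neg, Complex.cpow_neg, one_div]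
  norm_cast

lemma zetaS_pos {s : ℝ} (hs : 1 < s) : 0 < zetaS s := by
  simpa only [← ofReal_zetaS hs, Complex.ofReal_re] using riemannZeta_re_pos_of_one_lt hs

lemma hasSum_exp_neg_nat_add_one_mul {t : ℝ} (ht : 0 < t) :
    HasSum (fun n : ℕ ↦ Real.exp (-((n : ℝ) + 1) * t)) (Real.exp t - 1)⁻¹ := by
  have exp_neg_lt_one : Real.exp (-t) < 1 := Real.exp_lt_one_iff.2 (neg_lt_zero.2 ht)
  have geometric :=
    (hasSum_geometric_of_lt_one (Real.exp_pos (-t)).le exp_neg_lt_one).mul_left (Real.exp (-t))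
  have sum_eq : Real.exp (-t) * (1 - Real.exp (-t))⁻¹ = (Real.exp t - 1)⁻¹ := by
    rw [Real.exp_neg, ← mul_inv, mul_one_sub, mul_inv_cancel₀ (Real.exp_ne_zero t)]
  rw [sum_eq] at geometric
  refine geometric.congr_fun fun n ↦ ?_
  rw [← Real.exp_nat_mul, ← Real.exp_add]
  ring_nf

lemma mellin_inv_exp_sub_one {s : ℂ} (hs : 1 < s.re) :
    mellin (fun t ↦ (((Real.exp t - 1)⁻¹ : ℝ) : ℂ)) s = Complex.Gamma s * riemannZeta s := by
  have summable_coeff : Summable fun n : ℕ ↦ ‖(1 : ℂ)‖ / ((n : ℝ) + 1) ^ s.re := by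
    refine ((Real.summable_one_div_nat_add_rpow 1 s.re).2 hs).congr fun n ↦ ?_
    rw [norm_one, abs_of_pos (by positivity)]
  have mellin_termwise := hasSum_mellin (a := fun _ : ℕ ↦ 1) (p := fun n ↦ (n : ℝ) + 1)
    (F := fun t ↦ (((Real.exp t - 1)⁻¹ : ℝ) : ℂ)) (fun n ↦ .inr (by positivity)) (by linarith)
    (fun t ht ↦ by
      simpa only [one_mul] using Complex.hasSum_ofReal.2 (hasSum_exp_neg_nat_add_one_mul ht))
    summable_coeff
  rw [← mellin_termwise.tsum_eq, zeta_eq_tsum_one_div_nat_add_one_cpow hs, ← tsum_mul_left]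
  simp only [mul_div_assoc, Complex.ofReal_add, Complex.ofReal_natCast, Complex.ofReal_one]

lemma integral_rpow_div_exp_sub_one {s : ℝ} (hs : 1 < s) :
    ∫ t in Set.Ioi (0 : ℝ), t ^ (s - 1) / (Real.exp t - 1) = zetaS s * Real.Gamma s := by
  apply Complex.ofReal_injective
  calc ((∫ t in Set.Ioi (0 : ℝ), t ^ (s - 1) / (Real.exp t - 1) : ℝ) : ℂ)
      = mellin (fun t ↦ (((Real.exp t - 1)⁻¹ : ℝ) : ℂ)) s := by
        rw [mellin, ← integral_complex_ofReal]
        refine setIntegral_congr_fun measurableSet_Ioi fun t ht ↦ ?_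
        simp only [div_eq_mul_inv, Complex.ofReal_mul, Complex.ofReal_cpow (Set.mem_Ioi.1 ht).le,
          Complex.ofReal_sub, Complex.ofReal_one, smul_eq_mul]
    _ = Complex.Gamma s * riemannZeta s := mellin_inv_exp_sub_one (by simpa using hs)
    _ = ((zetaS s * Real.Gamma s : ℝ) : ℂ) := by
        rw [Complex.Gamma_ofReal, ← ofReal_zetaS hs, Complex.ofReal_mul, mul_comm]

lemma integral_log_rpow_div_mul_sub_one {s : ℝ} (hs : 1 < s) :
    ∫ γ in Set.Ioi (1 : ℝ), Real.log γ ^ (s - 1) / (γ * (γ - 1)) = zetaS s * Real.Gamma s := by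
  rw [← integral_rpow_div_exp_sub_one hs, ← Real.log_one, ← integral_comp_log_Ioi _ one_pos]
  refine setIntegral_congr_fun measurableSet_Ioi fun γ hγ ↦ ?_
  simp only [Real.exp_log (one_pos.trans hγ), smul_eq_mul]
  rw [mul_comm γ, ← div_div, div_eq_inv_mul _ γ]

/-- The function `g(γ) = (ln γ)^(s-1)/(ζ(s)Γ(s)γ(γ-1))` is a probability density
on `(1,∞)`: it is nonnegative there and integrates to 1.  Moreover it is the
density of `γ = 1/p` when `p` has density `f(p) = (-ln p)^(s-1)/(ζ(s)Γ(s)(1-p))`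
on `(0,1)`, i.e. `g(γ) = f(1/γ)·γ⁻²` on `(1,∞)`. -/
theorem reciprocal_mixing_density_is_pdf (s : ℝ) (hs : 1 < s) :
    (∀ γ ∈ Set.Ioi (1 : ℝ),
        0 ≤ (Real.log γ) ^ (s - 1) / (zetaS s * Real.Gamma s * γ * (γ - 1))) ∧
    (∫ γ in Set.Ioi (1 : ℝ),
        (Real.log γ) ^ (s - 1) / (zetaS s * Real.Gamma s * γ * (γ - 1)) = 1) ∧
    (∀ γ ∈ Set.Ioi (1 : ℝ),
        (Real.log γ) ^ (s - 1) / (zetaS s * Real.Gamma s * γ * (γ - 1))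
          = ((-Real.log (1 / γ)) ^ (s - 1) / (zetaS s * Real.Gamma s * (1 - 1 / γ)))
              * (1 / γ ^ 2)) := by
  have normalizer_pos : 0 < zetaS s * Real.Gamma s :=
    mul_pos (zetaS_pos hs) (Real.Gamma_pos_of_pos (one_pos.trans hs))
  refine ⟨fun γ hγ ↦ ?_, ?_, fun γ hγ ↦ ?_⟩
  · have log_pos : 0 < Real.log γ := Real.log_pos hγ
    have sub_one_pos : 0 < γ - 1 := sub_pos.2 hγ
    have γ_pos : 0 < γ := one_pos.trans hγ
    positivity
  · have factor_normalizer (γ : ℝ) :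
        Real.log γ ^ (s - 1) / (zetaS s * Real.Gamma s * γ * (γ - 1)) =
          Real.log γ ^ (s - 1) / (γ * (γ - 1)) / (zetaS s * Real.Gamma s) := by
      rw [div_div, mul_assoc _ γ, mul_comm (zetaS s * Real.Gamma s)]
    simp only [factor_normalizer]
    rw [integral_div, integral_log_rpow_div_mul_sub_one hs, div_self normalizer_pos.ne']
  · have γ_ne_zero : γ ≠ 0 := (one_pos.trans hγ).ne'
    have one_sub_inv : 1 - 1 / γ = (γ - 1) / γ := by rw [sub_div, div_self γ_ne_zero]
    rw [one_sub_inv, one_div γ, Real.log_inv, neg_neg]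
    field_simp
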